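/- Fix integers r ≥ 2, d_0 ≥ 2, and i ≥ 1. Then the width d_i = 2d_0 − 2 is an asymptotic bottleneck: there exists h̃ (with h̃ ≥ i) such that for all h > h̃ and for all positive integers d_1, …, d_{i−1}, d_{i+1}, …, d_h, the architecture (d_0, d_1, …, d_{i−1}, 2d_0 − 2, d_{i+1}, …, d_h) is non-filling; that is, there exists a nonzero real polynomial in the coefficients (a nonzero polynomial function on Sym_{r^{h−1}}(ℝ^{d_0})^{d_h}) that vanishes identically on the functional space F_{(d_0,…,d_h),r}. -/

import Mathlib

/-- The polynomial network map: `net r d W h` is the tuple of `d h` homogeneous polynomials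
in `d 0` variables computed by the network with architecture `(d 0, …, d h)`, activation
`ρ_r` (coordinatewise `r`-th power), and weight matrices `W j ∈ ℝ^{d (j+1) × d j}`. -/
noncomputable def net (r : ℕ) (d : ℕ → ℕ)
    (W : ∀ j : ℕ, Matrix (Fin (d (j + 1))) (Fin (d j)) ℝ) :
    (h : ℕ) → Fin (d h) → MvPolynomial (Fin (d 0)) ℝ
  | 0 => fun i => MvPolynomial.X i
  | h + 1 => fun i => ∑ k : Fin (d h), MvPolynomial.C (W h i k) *
      net r d W h k ^ (if h = 0 then 1 else r)

/-!
The output of the network is a tuple of forms `G (P ^ r)`, where `P` is the tuple of the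
`d i ≤ 2 d₀ - 2` forms computed by layer `i`. By Krull's height theorem there are pairs of nonzero
points `x`, `y` at which the `P k` agree up to `r`-th roots of unity, with `x` on any prescribed
hyperplane; so all `G (P ^ r)` satisfy the linear condition `f x = f y`, or a tangent condition at
`x` when `x` and `y` are proportional. Varying the hyperplane gives as many independent conditions
as the degree permits, and the codimension of the space of all `G (P ^ r)` with `P` fixed is
unbounded as the degree of `G` grows. The number of coefficients of `P` does not depend on that
degree. Once the codimension exceeds it, a transcendence degree count over the generic `P` yields a
polynomial relation between the coefficients of `G (P ^ r)`.
-/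

open MvPolynomial

section CommonZeros

variable {K σ : Type*} [Field K]

theorem height_vanishingIdeal_singleton_eq (x y : σ → K) :
    (vanishingIdeal K {x}).height = (vanishingIdeal K {y}).height := by
  let translation : MvPolynomial σ K ≃ₐ[K] MvPolynomial σ K := AlgEquiv.ofAlgHom
    (aeval fun a => X a + C (x a - y a)) (aeval fun a => X a - C (x a - y a))
    (by ext; simp) (by ext; simp)
  rw [← RingEquiv.height_comap translation.toRingEquiv (vanishingIdeal K {y})]
  congr 1
  ext p
  have aeval_comp : (aeval y).comp translation.toAlgHom = aeval x := by ext; simp [translation]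
  simpa [mem_vanishingIdeal_singleton_iff] using
    (congrArg (· = 0) (DFunLike.congr_fun aeval_comp p)).symm

variable [IsAlgClosed K] [Finite σ]

theorem height_vanishingIdeal_singleton (x : σ → K) :
    (vanishingIdeal K {x}).height = Nat.card σ := by
  have sup_height : ⨆ (I : Ideal (MvPolynomial σ K)) (_ : I.IsMaximal), I.height =
      (vanishingIdeal K {x}).height := by
    refine le_antisymm (iSup₂_le fun I hI => ?_)
      (le_iSup₂_of_le _ (isMaximal_iff_eq_vanishingIdeal_singleton.mpr ⟨x, rfl⟩) le_rfl)
    obtain ⟨y, rfl⟩ := isMaximal_iff_eq_vanishingIdeal_singleton.mp hI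
    exact (height_vanishingIdeal_singleton_eq y x).le
  have dim := Ideal.sup_isMaximal_height_eq_ringKrullDim (R := MvPolynomial σ K)
  rw [sup_height, MvPolynomial.ringKrullDim_of_isNoetherianRing, ringKrullDim_eq_zero_of_field,
    zero_add] at dim
  exact_mod_cast dim

/-- By Krull's height theorem, since the common zero locus is not the single point `0`. -/
theorem exists_ne_zero_forall_eval_eq_zero {ι : Type*} [Finite ι]
    (hcard : Nat.card ι < Nat.card σ) (F : ι → MvPolynomial σ K) (hF : ∀ i, eval 0 (F i) = 0) :
    ∃ x : σ → K, x ≠ 0 ∧ ∀ i, eval x (F i) = 0 := by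
  by_contra! hcon
  have locus_eq : zeroLocus K (Ideal.span (Set.range F)) = {0} := by
    ext x
    simp only [zeroLocus_span, Set.mem_ofPred_eq, Set.forall_mem_range, Set.mem_singleton_iff,
      aeval_eq_eval]
    refine ⟨fun hx => ?_, by rintro rfl; exact hF⟩
    by_contra hne
    obtain ⟨i, hi⟩ := hcon x hne
    exact hi (hx i)
  have mem_minimalPrimes :
      vanishingIdeal K {(0 : σ → K)} ∈ (Ideal.span (Set.range F)).minimalPrimes := by
    rw [← Ideal.radical_minimalPrimes, ← vanishingIdeal_zeroLocus_eq_radical (K := K), locus_eq,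
      Ideal.minimalPrimes_eq_subsingleton_self]
    rfl
  have height_le :=
    Ideal.height_le_card_of_mem_minimalPrimes_span (Set.finite_range F) mem_minimalPrimes
  rw [height_vanishingIdeal_singleton, ← Nat.card_coe_set_eq] at height_le
  have card_le : Nat.card σ ≤ Nat.card (Set.range F) := by exact_mod_cast height_le
  exact absurd (card_le.trans (Finite.card_range_le F)) hcard.not_ge

end CommonZeros

section Triangular

variable {K V : Type*} [Field K] [AddCommGroup V] [Module K V]

theorem finrank_inf_ker_add_one_le (U : Submodule K V) [Module.Finite K U] (φ : Module.Dual K V)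
    {f : V} (hf : f ∈ U) (hφ : φ f ≠ 0) :
    Module.finrank K ↥(U ⊓ LinearMap.ker φ) + 1 ≤ Module.finrank K U :=
  Submodule.finrank_lt_finrank_of_lt (inf_lt_left.mpr fun h => hφ (h hf))

theorem finrank_add_le_of_triangular {S U : Submodule K V} [Module.Finite K U] (hSU : S ≤ U)
    {N : ℕ} (φ : Fin N → Module.Dual K V) (f : Fin N → V) (hφS : ∀ j, S ≤ LinearMap.ker (φ j))
    (hfU : ∀ j, f j ∈ U) (hdiag : ∀ j, φ j (f j) ≠ 0) (htri : ∀ i j, i < j → φ i (f j) = 0) :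
    Module.finrank K S + N ≤ Module.finrank K U := by
  induction N generalizing U with
  | zero => exact Submodule.finrank_mono hSU
  | succ N ih =>
    have drop := finrank_inf_ker_add_one_le U (φ 0) (hfU 0) (hdiag 0)
    have : Module.Finite K ↥(U ⊓ LinearMap.ker (φ 0)) :=
      Submodule.finiteDimensional_of_le inf_le_left
    have rest := ih (le_inf hSU (hφS 0)) (fun j => φ j.succ) (fun j => f j.succ)
      (fun j => hφS j.succ) (fun j => ⟨hfU j.succ, htri 0 j.succ j.succ_pos⟩)
      (fun j => hdiag j.succ) (fun i j hij => htri _ _ (Fin.succ_lt_succ_iff.mpr hij))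
    omega

end Triangular

section Forms

theorem aeval_smul_of_isHomogeneous {R A σ : Type*} [CommSemiring R] [CommSemiring A] [Algebra R A]
    {f : MvPolynomial σ R} {m : ℕ} (hf : f.IsHomogeneous m) (c : A) (x : σ → A) :
    aeval (c • x) f = c ^ m * aeval x f := by
  simp only [aeval_def, eval₂_eq, Finset.mul_sum]
  refine Finset.sum_congr rfl fun α hα => ?_
  simp only [Pi.smul_apply, smul_eq_mul, mul_pow, Finset.prod_mul_distrib,
    Finset.prod_pow_eq_pow_sum, ← hf.degree_eq_sum_deg_support hα]
  ring

theorem aeval_zero_of_isHomogeneous {R A σ : Type*} [CommSemiring R] [CommSemiring A] [Algebra R A]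
    {f : MvPolynomial σ R} {m : ℕ} (hf : f.IsHomogeneous m) (hm : m ≠ 0) :
    aeval (0 : σ → A) f = 0 := by
  simpa [hm] using aeval_smul_of_isHomogeneous hf (0 : A) 0

variable {R σ : Type*} [CommSemiring R]

/-- The linear form `∑ a, w a * X a` with coefficient vector `w`. -/
noncomputable def linForm [Fintype σ] (w : σ → R) : MvPolynomial σ R :=
  ∑ a, C (w a) * X a

theorem isHomogeneous_linForm [Fintype σ] (w : σ → R) : (linForm w).IsHomogeneous 1 :=
  IsHomogeneous.sum _ _ _ fun _ _ => isHomogeneous_C_mul_X _ _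

@[simp]
theorem eval_linForm [Fintype σ] (w x : σ → R) : eval x (linForm w) = w ⬝ᵥ x := by
  simp [linForm, dotProduct]

/-- Restriction of a polynomial to the parametrized line `t ↦ x + t v`. -/
noncomputable def lineRestrict (x v : σ → R) : MvPolynomial σ R →ₐ[R] Polynomial R :=
  aeval fun a => Polynomial.C (x a) + Polynomial.C (v a) * Polynomial.X

theorem lineRestrict_linForm [Fintype σ] (w x v : σ → R) :
    lineRestrict x v (linForm w) =
      Polynomial.C (w ⬝ᵥ x) + Polynomial.C (w ⬝ᵥ v) * Polynomial.X := by
  simp [lineRestrict, linForm, dotProduct, Finset.sum_add_distrib, Finset.sum_mul, mul_add,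
    mul_assoc, algHom_C]

theorem coeff_zero_lineRestrict (x v : σ → R) (f : MvPolynomial σ R) :
    (lineRestrict x v f).coeff 0 = eval x f := by
  have comp_eq : (Polynomial.aeval (0 : R)).comp (lineRestrict x v) = aeval x := by
    ext; simp [lineRestrict]
  simpa [Polynomial.coeff_zero_eq_aeval_zero] using DFunLike.congr_fun comp_eq f

theorem coeff_one_lineRestrict [Fintype σ] (x v : σ → R) (f : MvPolynomial σ R) :
    (lineRestrict x v f).coeff 1 = (fun a => eval x (pderiv a f)) ⬝ᵥ v := by
  classical
  induction f using MvPolynomial.induction_on with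
  | C c => simp [algHom_C, dotProduct]
  | add f g hf hg => simp [hf, hg, dotProduct, Finset.sum_add_distrib, add_mul]
  | mul_X f b hf =>
    have coeff_zero_X : (lineRestrict x v (X b)).coeff 0 = x b := by simp [lineRestrict]
    have coeff_one_X : (lineRestrict x v (X b)).coeff 1 = v b := by simp [lineRestrict]
    rw [map_mul, Polynomial.mul_coeff_one, hf, coeff_zero_lineRestrict, coeff_zero_X, coeff_one_X]
    simp only [Derivation.leibniz, pderiv_X, Pi.single_apply, dotProduct, smul_eq_mul, map_add,
      map_mul, eval_X, apply_ite (eval x), map_zero, add_mul, Finset.sum_add_distrib,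
      mul_ite, mul_one, mul_zero, ite_mul, zero_mul, Finset.sum_ite_eq, Finset.mem_univ, if_true,
      Finset.sum_mul]
    congr 1
    exact Finset.sum_congr rfl fun a _ => by ring

theorem coeff_one_lineRestrict_smul_self [Finite σ] {f : MvPolynomial σ R} {m : ℕ}
    (hf : f.IsHomogeneous m) (x : σ → R) (c : R) :
    (lineRestrict x (c • x) f).coeff 1 = c * (m * eval x f) := by
  cases nonempty_fintype σ
  have euler : ∑ a, x a * eval x (pderiv a f) = m * eval x f := by
    simpa using congrArg (eval x) hf.sum_X_mul_pderiv
  rw [coeff_one_lineRestrict, dotProduct_smul, dotProduct_comm, smul_eq_mul, ← euler]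
  rfl

theorem polynomial_coeff_one_pow (p : Polynomial R) (r : ℕ) :
    (p ^ r).coeff 1 = r * p.coeff 0 ^ (r - 1) * p.coeff 1 := by
  simpa [← Polynomial.coe_pow, mul_right_comm] using
    PowerSeries.coeff_one_pow r (p : PowerSeries R)

theorem coeff_one_lineRestrict_aeval_eq_zero {ι : Type*} {Q : ι → MvPolynomial σ R} {x v : σ → R}
    (hQ : ∀ k, (lineRestrict x v (Q k)).coeff 1 = 0) (G : MvPolynomial ι R) :
    (lineRestrict x v (aeval Q G)).coeff 1 = 0 := by
  induction G using MvPolynomial.induction_on with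
  | C c => simp [algHom_C]
  | add f g hf hg => rw [map_add, map_add, Polynomial.coeff_add, hf, hg, add_zero]
  | mul_X f k hf =>
    rw [map_mul, map_mul, aeval_X, Polynomial.mul_coeff_one, hf, hQ, mul_zero, zero_mul, add_zero]

end Forms

theorem exists_notMem_span_singleton {K V : Type*} [Field K] [AddCommGroup V] [Module K V]
    (hV : 1 < Module.finrank K V) (x : V) : ∃ v, v ∉ Submodule.span K {x} := by
  by_contra! h
  exact hV.not_ge (finrank_le_one x fun v => Submodule.mem_span_singleton.mp (h v))

theorem exists_dotProduct_eq_zero_ne_zero {K σ : Type*} [Field K] [Fintype σ] {x y : σ → K}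
    (hxy : x ∉ Submodule.span K {y}) : ∃ w : σ → K, w ⬝ᵥ y = 0 ∧ w ⬝ᵥ x ≠ 0 := by
  classical
  obtain ⟨l, hlx, hly⟩ := Submodule.exists_le_ker_of_notMem hxy
  obtain ⟨w, rfl⟩ := (dotProductEquiv K σ).surjective l
  exact ⟨w, hly (Submodule.mem_span_singleton_self y), hlx⟩

section Compositions

variable {R K σ ι : Type*} [CommSemiring R] [Field K]

/-- The space of compositions `G(Q)` of a tuple `Q` of polynomials with forms `G` of degree `D`. -/
noncomputable def compositionSpace (Q : ι → MvPolynomial σ R) (D : ℕ) :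
    Submodule R (MvPolynomial σ R) :=
  (homogeneousSubmodule ι R D).map (aeval Q).toLinearMap

theorem compositionSpace_le_homogeneousSubmodule {Q : ι → MvPolynomial σ R} {e : ℕ}
    (hQ : ∀ k, (Q k).IsHomogeneous e) (D : ℕ) :
    compositionSpace Q D ≤ homogeneousSubmodule σ R (e * D) := by
  rintro _ ⟨G, hG, rfl⟩
  exact IsHomogeneous.aeval hG Q hQ

theorem map_mem_compositionSpace {S : Type*} [CommSemiring S] (φ : R →+* S)
    {Q : ι → MvPolynomial σ R} {D : ℕ} {f : MvPolynomial σ R} (hf : f ∈ compositionSpace Q D) :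
    map φ f ∈ compositionSpace (fun k => map φ (Q k)) D := by
  obtain ⟨G, hG, rfl⟩ := hf
  exact ⟨map φ G, IsHomogeneous.map hG φ, (map_bind₁ φ Q G).symm⟩

instance finite_homogeneousSubmodule [Finite σ] (E : ℕ) :
    Module.Finite K (homogeneousSubmodule σ K E) :=
  Module.Finite.of_fg (homogeneousSubmodule_fg σ K E)

theorem coeff_lineRestrict_eq_zero_of_mem_compositionSpace {Q : ι → MvPolynomial σ K}
    {x v : σ → K} (hQ : ∀ k, eval x (Q k) = 0) {D j : ℕ} (hj : j < D) {f : MvPolynomial σ K}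
    (hf : f ∈ compositionSpace Q D) : (lineRestrict x v f).coeff j = 0 := by
  obtain ⟨G, hG, rfl⟩ := hf
  have X_dvd (k : ι) : Polynomial.X ∣ lineRestrict x v (Q k) := by
    rw [Polynomial.X_dvd_iff, coeff_zero_lineRestrict, hQ]
  choose p hp using X_dvd
  have factor : lineRestrict x v (aeval Q G) = Polynomial.X ^ D * aeval p G := by
    rw [← aeval_smul_of_isHomogeneous hG, comp_aeval_apply]
    congr 2
    exact funext hp
  exact Polynomial.X_pow_dvd_iff.mp ⟨_, factor⟩ j hj

theorem finrank_compositionSpace_add_le_of_common_zero [Finite σ] [Nontrivial σ]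
    {Q : ι → MvPolynomial σ K} {e : ℕ}
    (he : e ≠ 0) (hQ : ∀ k, (Q k).IsHomogeneous e) {x : σ → K} (hx : x ≠ 0)
    (hQx : ∀ k, eval x (Q k) = 0) {D N : ℕ} (hN : N ≤ D) :
    Module.finrank K (compositionSpace Q D) + N ≤
      Module.finrank K (homogeneousSubmodule σ K (e * D)) := by
  -- The members of the composition space vanish at `x` to order `D`.
  cases nonempty_fintype σ
  obtain ⟨v, hv⟩ := exists_notMem_span_singleton
    (by simpa using Fintype.one_lt_card (α := σ) : 1 < Module.finrank K (σ → K)) x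
  obtain ⟨ν, hνx, hνv⟩ := exists_dotProduct_eq_zero_ne_zero hv
  obtain ⟨μ, -, hμ⟩ := exists_dotProduct_eq_zero_ne_zero (x := x) (y := 0) (by simpa using hx)
  have hD : D ≤ e * D := Nat.le_mul_of_pos_left D (Nat.pos_of_ne_zero he)
  let f (j : Fin N) : MvPolynomial σ K := linForm ν ^ (j : ℕ) * linForm μ ^ (e * D - j)
  have lineRestrict_f (j : Fin N) : lineRestrict x v (f j) = Polynomial.X ^ (j : ℕ) *
      (Polynomial.C ((ν ⬝ᵥ v) ^ (j : ℕ)) * lineRestrict x v (linForm μ) ^ (e * D - j)) := by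
    simp only [f, map_mul, map_pow, lineRestrict_linForm, hνx, map_zero, zero_add, mul_pow]
    ring
  refine finrank_add_le_of_triangular (compositionSpace_le_homogeneousSubmodule hQ D)
    (fun j => Polynomial.lcoeff K j ∘ₗ (lineRestrict x v).toLinearMap) f
    (fun j g hg => coeff_lineRestrict_eq_zero_of_mem_compositionSpace hQx (by omega) hg)
    (fun j => ?_) (fun j => ?_) (fun i j hij => ?_)
  · have := ((isHomogeneous_linForm ν).pow j).mul ((isHomogeneous_linForm μ).pow (e * D - j))
    rwa [← mul_add, one_mul, Nat.add_sub_cancel' (by omega)] at this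
  · change (lineRestrict x v (f j)).coeff j ≠ 0
    rw [lineRestrict_f, Polynomial.coeff_X_pow_mul', if_pos le_rfl, Nat.sub_self,
      Polynomial.coeff_C_mul, ← Polynomial.constantCoeff_apply, map_pow,
      Polynomial.constantCoeff_apply, coeff_zero_lineRestrict, eval_linForm]
    exact mul_ne_zero (pow_ne_zero _ hνv) (pow_ne_zero _ hμ)
  · exact Polynomial.X_pow_dvd_iff.mp ⟨_, lineRestrict_f j⟩ i hij

end Compositions

/-- A linear condition on polynomials of the same nature as equality of the values at two points,
the second of which may be infinitely near to the first (`y = x`): it vanishes on `f ^ 2 * g` for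
every `f` through both points, and it is nonzero on the products of polynomials nonvanishing at `x`
with a suitable linear form. -/
structure FirstOrderCondition (K σ : Type*) [Field K] where
  functional : Module.Dual K (MvPolynomial σ K)
  x : σ → K
  y : σ → K
  x_ne_zero : x ≠ 0
  y_ne_zero : y ≠ 0
  functional_sq_mul : ∀ f g, eval x f = 0 → eval y f = 0 → functional (f ^ 2 * g) = 0
  exists_linear : ∃ ℓ : MvPolynomial σ K, ℓ.IsHomogeneous 1 ∧
    ∀ g, eval x g ≠ 0 → functional (g * ℓ) ≠ 0

namespace FirstOrderCondition

variable {K σ : Type*} [Field K] [Finite σ]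

/-- The condition that a polynomial takes the same value at `x` and `y`. -/
noncomputable def ofPair (x y : σ → K) (hy : y ≠ 0) (hxy : x ∉ Submodule.span K {y}) :
    FirstOrderCondition K σ where
  functional := (aeval x).toLinearMap - (aeval y).toLinearMap
  x := x
  y := y
  x_ne_zero := by
    rintro rfl
    exact hxy (zero_mem _)
  y_ne_zero := hy
  functional_sq_mul f g hx hy := by simp [aeval_eq_eval, hx, hy]
  exists_linear := by
    cases nonempty_fintype σ
    obtain ⟨w, hwy, hwx⟩ := exists_dotProduct_eq_zero_ne_zero hxy
    exact ⟨linForm w, isHomogeneous_linForm w, fun g hg => by simp [aeval_eq_eval, hwy, hwx, hg]⟩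

/-- The condition that the derivative at `x` in the direction `v` vanishes. -/
noncomputable def ofTangent (x v : σ → K) (hx : x ≠ 0) (hv : v ∉ Submodule.span K {x}) :
    FirstOrderCondition K σ where
  functional := Polynomial.lcoeff K 1 ∘ₗ (lineRestrict x v).toLinearMap
  x := x
  y := x
  x_ne_zero := hx
  y_ne_zero := hx
  functional_sq_mul f g hf _ := by
    simp [pow_two, Polynomial.mul_coeff_one, coeff_zero_lineRestrict, hf]
  exists_linear := by
    cases nonempty_fintype σ
    obtain ⟨w, hwx, hwv⟩ := exists_dotProduct_eq_zero_ne_zero hv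
    refine ⟨linForm w, isHomogeneous_linForm w, fun g hg => ?_⟩
    simp [Polynomial.mul_coeff_one, lineRestrict_linForm, coeff_zero_lineRestrict, hwx, hwv, hg]

theorem exists_separating (c : FirstOrderCondition K σ) {z : σ → K}
    (hzx : z ∉ Submodule.span K {c.x}) (hzy : z ∉ Submodule.span K {c.y}) :
    ∃ g : MvPolynomial σ K, g.IsHomogeneous 4 ∧ eval z g ≠ 0 ∧ ∀ u, c.functional (g * u) = 0 := by
  cases nonempty_fintype σ
  obtain ⟨w, hwx, hwz⟩ := exists_dotProduct_eq_zero_ne_zero hzx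
  obtain ⟨w', hwy, hwz'⟩ := exists_dotProduct_eq_zero_ne_zero hzy
  refine ⟨(linForm w * linForm w') ^ 2,
    ((isHomogeneous_linForm w).mul (isHomogeneous_linForm w')).pow 2, ?_,
    fun u => c.functional_sq_mul _ u ?_ ?_⟩
  · simp [hwz, hwz']
  · simp [hwx]
  · simp [hwy]

theorem exists_isHomogeneous_functional_ne_zero {N : ℕ} (c : Fin N → FirstOrderCondition K σ)
    (hcx : ∀ i j, i < j → (c j).x ∉ Submodule.span K {(c i).x})
    (hcy : ∀ i j, i < j → (c j).x ∉ Submodule.span K {(c i).y}) (j : Fin N) {E : ℕ}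
    (hE : 4 * (j : ℕ) + 1 ≤ E) :
    ∃ f : MvPolynomial σ K, f.IsHomogeneous E ∧ (c j).functional f ≠ 0 ∧
      ∀ i < j, (c i).functional f = 0 := by
  cases nonempty_fintype σ
  choose! g hg_homog hgx hg using fun i hij => exists_separating (c i) (hcx i j hij) (hcy i j hij)
  obtain ⟨μ, -, hμ⟩ := exists_dotProduct_eq_zero_ne_zero (x := (c j).x) (y := 0)
    (by simpa using (c j).x_ne_zero)
  obtain ⟨ℓ, hℓ_homog, hℓ⟩ := (c j).exists_linear
  refine ⟨(∏ i ∈ Finset.Iio j, g i) * linForm μ ^ (E - 1 - 4 * (j : ℕ)) * ℓ, ?_, hℓ _ ?_,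
    fun i hij => ?_⟩
  · have prod_homog : (∏ i ∈ Finset.Iio j, g i).IsHomogeneous (∑ _i ∈ Finset.Iio j, 4) :=
      IsHomogeneous.prod _ _ _ fun i hi => hg_homog i (Finset.mem_Iio.mp hi)
    convert (prod_homog.mul ((isHomogeneous_linForm μ).pow _)).mul hℓ_homog using 1
    simp only [Finset.sum_const, Fin.card_Iio, smul_eq_mul]
    omega
  · simp only [map_mul, map_prod, map_pow, eval_linForm]
    exact mul_ne_zero (Finset.prod_ne_zero_iff.mpr fun i hi => hgx i (Finset.mem_Iio.mp hi))
      (pow_ne_zero _ hμ)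
  · obtain ⟨u, hu⟩ := Finset.dvd_prod_of_mem g (Finset.mem_Iio.mpr hij)
    rw [hu, mul_assoc, mul_assoc]
    exact hg i hij _

theorem finrank_add_le {N : ℕ} (c : Fin N → FirstOrderCondition K σ)
    (hcx : ∀ i j, i < j → (c j).x ∉ Submodule.span K {(c i).x})
    (hcy : ∀ i j, i < j → (c j).x ∉ Submodule.span K {(c i).y}) {E : ℕ} (hE : 4 * N ≤ E)
    {S : Submodule K (MvPolynomial σ K)} (hSE : S ≤ homogeneousSubmodule σ K E)
    (hS : ∀ j, S ≤ LinearMap.ker (c j).functional) :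
    Module.finrank K S + N ≤ Module.finrank K (homogeneousSubmodule σ K E) := by
  choose f hf_homog hf_ne hf using fun j : Fin N =>
    exists_isHomogeneous_functional_ne_zero c hcx hcy j (E := E) (by omega)
  exact finrank_add_le_of_triangular hSE (fun j => (c j).functional) f hS hf_homog hf_ne
    fun i j hij => hf j i hij

end FirstOrderCondition

section Conditions

variable {K σ ι : Type*} [Field K]

theorem exists_twisted_pair [IsAlgClosed K] [Fintype σ] [Finite ι]
    (hcard : Nat.card ι + 2 ≤ 2 * Nat.card σ) {P : ι → MvPolynomial σ K} {δ : ℕ} (hδ : δ ≠ 0)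
    (hP : ∀ k, (P k).IsHomogeneous δ) (hP0 : ∀ x, x ≠ 0 → ∃ k, eval x (P k) ≠ 0) {c : ι → K}
    (hc : ∀ k, c k ≠ 0) (w : σ → K) :
    ∃ x y : σ → K, x ≠ 0 ∧ y ≠ 0 ∧ w ⬝ᵥ x = 0 ∧ ∀ k, eval x (P k) = c k * eval y (P k) := by
  have eval_zero (k : ι) : eval 0 (P k) = 0 := by
    rw [← aeval_eq_eval]
    exact aeval_zero_of_isHomogeneous (hP k) hδ
  let F : Option ι → MvPolynomial (σ ⊕ σ) K := fun o =>
    o.elim (rename Sum.inl (linForm w)) fun k =>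
      rename Sum.inl (P k) - C (c k) * rename Sum.inr (P k)
  have hF : ∀ o, eval 0 (F o) = 0 := by
    have zero_comp (f : σ → σ ⊕ σ) : (0 : σ ⊕ σ → K) ∘ f = 0 := rfl
    rintro (_ | k) <;> simp only [F, Option.elim, map_sub, map_mul, eval_rename, zero_comp,
      eval_linForm, dotProduct_zero, eval_zero, mul_zero, sub_zero]
  obtain ⟨z, hz0, hz⟩ := exists_ne_zero_forall_eval_eq_zero (K := K)
    (by rw [Finite.card_option, Nat.card_sum]; omega) F hF
  have hwx : w ⬝ᵥ (z ∘ Sum.inl) = 0 := by simpa [F, eval_rename] using hz none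
  have agree (k : ι) : eval (z ∘ Sum.inl) (P k) = c k * eval (z ∘ Sum.inr) (P k) :=
    sub_eq_zero.mp (by simpa [F, eval_rename] using hz (some k))
  have zero_iff : z ∘ Sum.inl = 0 ↔ z ∘ Sum.inr = 0 := by
    constructor <;> intro h <;> by_contra hne <;> obtain ⟨k, hk⟩ := hP0 _ hne
    · exact mul_ne_zero (hc k) hk (by rw [← agree k, h, eval_zero])
    · exact hk (by rw [agree k, h, eval_zero, mul_zero])
  have hx : z ∘ Sum.inl ≠ 0 := fun h => hz0 <| funext fun
    | Sum.inl a => congrFun h a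
    | Sum.inr a => congrFun (zero_iff.mp h) a
  exact ⟨_, _, hx, fun h => hx (zero_iff.mpr h), hwx, agree⟩

theorem exists_tangent [Fintype σ] {P : ι → MvPolynomial σ K} {δ r : ℕ} (hδ : (δ : K) ≠ 0)
    (hr : 2 ≤ r) (hP : ∀ k, (P k).IsHomogeneous δ) {x : σ → K} (hPx : ∃ k, eval x (P k) ≠ 0)
    (H : Finset ι) (hH : H.card < Fintype.card σ) (hPH : ∀ k ∉ H, eval x (P k) = 0) :
    ∃ v, v ∉ Submodule.span K {x} ∧ ∀ k, (lineRestrict x v (P k ^ r)).coeff 1 = 0 := by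
  let gradients : Matrix H σ K := fun k a => eval x (pderiv a (P k))
  obtain ⟨v, hv, hv0⟩ := Submodule.exists_mem_ne_zero_of_ne_bot
    (LinearMap.ker_ne_bot_of_finrank_lt (f := gradients.mulVecLin) (by simpa using hH))
  have coeff_eq_zero (k : ι) (hk : k ∈ H) : (lineRestrict x v (P k)).coeff 1 = 0 := by
    rw [coeff_one_lineRestrict]
    exact congrFun (LinearMap.mem_ker.mp hv) ⟨k, hk⟩
  refine ⟨v, fun hvx => ?_, fun k => ?_⟩
  · obtain ⟨b, rfl⟩ := Submodule.mem_span_singleton.mp hvx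
    obtain ⟨k, hk⟩ := hPx
    have euler := coeff_eq_zero k (by by_contra h; exact hk (hPH k h))
    rw [coeff_one_lineRestrict_smul_self (hP k)] at euler
    exact mul_ne_zero (left_ne_zero_of_smul hv0) (mul_ne_zero hδ hk) euler
  · rw [map_pow, polynomial_coeff_one_pow, coeff_zero_lineRestrict]
    by_cases hk : k ∈ H
    · rw [coeff_eq_zero k hk, mul_zero]
    · rw [hPH k hk, zero_pow (by omega), mul_zero, zero_mul]

theorem exists_forall_dotProduct_ne_zero [Infinite K] [Fintype σ] {κ : Type*} [Finite κ]
    (s : κ → σ → K) (hs : ∀ j, s j ≠ 0) : ∃ w : σ → K, ∀ j, w ⬝ᵥ s j ≠ 0 := by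
  classical
  obtain ⟨l, hl⟩ := Module.exists_dual_forall_apply_ne_zero (K := K) s hs
  obtain ⟨w, rfl⟩ := (dotProductEquiv K σ).surjective l
  exact ⟨w, hl⟩

theorem exists_firstOrderCondition_of_twisted_pair [Fintype σ] [Fintype ι] [DecidableEq ι]
    {P : ι → MvPolynomial σ K} {δ r : ℕ} (hδ : (δ : K) ≠ 0) (hr : 2 ≤ r)
    (hP : ∀ k, (P k).IsHomogeneous δ) {H : Finset ι} (hH : H.card < Fintype.card σ)
    (hHc : Hᶜ.card < Fintype.card σ) {ζ : K} (hζ : ζ ≠ 1) (hζr : ζ ^ r = 1) {x y : σ → K}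
    (hx : x ≠ 0) (hy : y ≠ 0) (hPx : ∃ k, eval x (P k) ≠ 0)
    (agree : ∀ k, eval x (P k) = (if k ∈ H then ζ else 1) * eval y (P k)) :
    ∃ c : FirstOrderCondition K σ, c.x = x ∧
      ∀ G : MvPolynomial ι K, c.functional (aeval (fun k => P k ^ r) G) = 0 := by
  -- At proportional points all `P k` nonvanishing at `x` have the same twist, so that either `H` or
  -- its complement contains their indices.
  by_cases hxy : x ∈ Submodule.span K {y}
  · obtain ⟨b, rfl⟩ := Submodule.mem_span_singleton.mp hxy
    have twist_eq (k : ι) (hk : eval (b • y) (P k) ≠ 0) : b ^ δ = if k ∈ H then ζ else 1 := by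
      have eval_eq := agree k
      have hyk : eval y (P k) ≠ 0 := fun h => hk (by rw [eval_eq, h, mul_zero])
      rw [← aeval_eq_eval, aeval_smul_of_isHomogeneous (hP k), aeval_eq_eval] at eval_eq
      exact mul_right_cancel₀ hyk eval_eq
    obtain ⟨H', hH', hPH'⟩ : ∃ H' : Finset ι, H'.card < Fintype.card σ ∧
        ∀ k ∉ H', eval (b • y) (P k) = 0 := by
      by_cases hb : b ^ δ = ζ
      · refine ⟨H, hH, fun k hk => by_contra fun hne => hζ ?_⟩
        rw [← hb, twist_eq k hne, if_neg hk]
      · refine ⟨Hᶜ, hHc, fun k hk => by_contra fun hne => hb ?_⟩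
        rw [twist_eq k hne, if_pos (by simpa using hk)]
    obtain ⟨v, hv, hPv⟩ := exists_tangent hδ hr hP hPx H' hH' hPH'
    exact ⟨.ofTangent (b • y) v hx hv, rfl, coeff_one_lineRestrict_aeval_eq_zero hPv⟩
  · refine ⟨.ofPair x y hy hxy, rfl, fun G => sub_eq_zero.mpr ?_⟩
    have same_values : (aeval x).comp (aeval fun k => P k ^ r) =
        (aeval y).comp (aeval (R := K) fun k => P k ^ r) := by
      ext k
      simp [aeval_eq_eval, agree k, mul_pow, ite_pow, hζr]
    exact DFunLike.congr_fun same_values G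

theorem exists_firstOrderCondition [IsAlgClosed K] [Finite σ] [Finite ι]
    (hcard : Nat.card ι + 2 ≤ 2 * Nat.card σ) {P : ι → MvPolynomial σ K} {δ r : ℕ}
    (hδ : (δ : K) ≠ 0) (hr : 2 ≤ r) (hrK : (r : K) ≠ 0) (hP : ∀ k, (P k).IsHomogeneous δ)
    (hP0 : ∀ x, x ≠ 0 → ∃ k, eval x (P k) ≠ 0) {κ : Type*} [Finite κ] (s : κ → σ → K)
    (hs : ∀ j, s j ≠ 0) :
    ∃ c : FirstOrderCondition K σ, (∀ j, c.x ∉ Submodule.span K {s j}) ∧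
      ∀ G : MvPolynomial ι K, c.functional (aeval (fun k => P k ^ r) G) = 0 := by
  classical
  cases nonempty_fintype σ
  cases nonempty_fintype ι
  simp only [Nat.card_eq_fintype_card] at hcard
  have : NeZero (r : K) := ⟨hrK⟩
  obtain ⟨ζ, hζ⟩ := HasEnoughRootsOfUnity.exists_primitiveRoot K r
  obtain ⟨H, -, hH⟩ := Finset.exists_subset_card_eq (s := (Finset.univ : Finset ι))
    (n := Fintype.card ι / 2) (by rw [Finset.card_univ]; omega)
  obtain ⟨w, hw⟩ := exists_forall_dotProduct_ne_zero s hs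
  obtain ⟨x, y, hx, hy, hwx, agree⟩ := exists_twisted_pair (by simpa using hcard)
    (c := fun k => if k ∈ H then ζ else 1) (by rintro rfl; simp at hδ) hP hP0
    (fun k => by split_ifs; exacts [hζ.ne_zero (by omega), one_ne_zero]) w
  obtain ⟨c, rfl, hc⟩ := exists_firstOrderCondition_of_twisted_pair hδ hr hP (by omega)
    (by rw [Finset.card_compl]; omega) (hζ.ne_one (by omega)) hζ.pow_eq_one hx hy (hP0 x hx) agree
  refine ⟨c, fun j hj => ?_, hc⟩
  obtain ⟨b, hb⟩ := Submodule.mem_span_singleton.mp hj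
  rw [← hb, dotProduct_smul, smul_eq_mul, mul_eq_zero, or_iff_left (hw j)] at hwx
  exact hx (by rw [← hb, hwx, zero_smul])

theorem exists_seq_firstOrderCondition [IsAlgClosed K] [Finite σ] [Finite ι]
    (hcard : Nat.card ι + 2 ≤ 2 * Nat.card σ) {P : ι → MvPolynomial σ K} {δ r : ℕ}
    (hδ : (δ : K) ≠ 0) (hr : 2 ≤ r) (hrK : (r : K) ≠ 0) (hP : ∀ k, (P k).IsHomogeneous δ)
    (hP0 : ∀ x, x ≠ 0 → ∃ k, eval x (P k) ≠ 0) :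
    ∃ c : ℕ → FirstOrderCondition K σ,
      (∀ j, ∀ G : MvPolynomial ι K, (c j).functional (aeval (fun k => P k ^ r) G) = 0) ∧
      ∀ i j, i < j →
        (c j).x ∉ Submodule.span K {(c i).x} ∧ (c j).x ∉ Submodule.span K {(c i).y} := by
  refine exists_seq_of_forall_finset_exists
    (fun c : FirstOrderCondition K σ =>
      ∀ G : MvPolynomial ι K, c.functional (aeval (fun k => P k ^ r) G) = 0)
    (fun c c' => c'.x ∉ Submodule.span K {c.x} ∧ c'.x ∉ Submodule.span K {c.y}) fun S _ => ?_
  obtain ⟨c, hcS, hc⟩ := exists_firstOrderCondition hcard hδ hr hrK hP hP0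
    (Sum.elim (fun c : S => c.1.x) fun c : S => c.1.y)
    (Sum.forall.mpr ⟨fun c => c.1.x_ne_zero, fun c => c.1.y_ne_zero⟩)
  exact ⟨c, hc, fun c' hc' => ⟨hcS (.inl ⟨c', hc'⟩), hcS (.inr ⟨c', hc'⟩)⟩⟩

theorem finrank_compositionSpace_pow_add_le [IsAlgClosed K] [Finite σ] [Nontrivial σ] [Finite ι]
    (hcard : Nat.card ι + 2 ≤ 2 * Nat.card σ) {P : ι → MvPolynomial σ K} {δ r : ℕ}
    (hδ : (δ : K) ≠ 0) (hr : 2 ≤ r) (hrK : (r : K) ≠ 0) (hP : ∀ k, (P k).IsHomogeneous δ)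
    {D N : ℕ} (hD : 4 * N ≤ D) :
    Module.finrank K (compositionSpace (fun k => P k ^ r) D) + N ≤
      Module.finrank K (homogeneousSubmodule σ K (δ * r * D)) := by
  have degree_ne_zero : δ * r ≠ 0 := mul_ne_zero (by rintro rfl; simp at hδ) (by omega)
  have hPr (k : ι) : (P k ^ r).IsHomogeneous (δ * r) := (hP k).pow r
  by_cases hP0 : ∀ x, x ≠ 0 → ∃ k, eval x (P k) ≠ 0
  · obtain ⟨c, hc, hcij⟩ := exists_seq_firstOrderCondition hcard hδ hr hrK hP hP0
    refine FirstOrderCondition.finrank_add_le (fun j : Fin N => c j)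
      (fun i j hij => (hcij i j hij).1)
      (fun i j hij => (hcij i j hij).2) (hD.trans (Nat.le_mul_of_pos_left D (by omega)))
      (compositionSpace_le_homogeneousSubmodule hPr D) ?_
    rintro j _ ⟨G, -, rfl⟩
    exact hc j G
  · push Not at hP0
    obtain ⟨x, hx, hPx⟩ := hP0
    exact finrank_compositionSpace_add_le_of_common_zero degree_ne_zero hPr hx
      (fun k => by rw [map_pow, hPx k, zero_pow (by omega)]) (by omega)

end Conditions

section Coefficients

/-- The exponents of the monomials of degree `E` in the variables `σ`. -/
abbrev ExponentOfDegree (σ : Type*) (E : ℕ) : Type _ :=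
  {α : σ →₀ ℕ // α.degree = E}

noncomputable instance fintypeExponentOfDegree (σ : Type*) [Finite σ] (E : ℕ) :
    Fintype (ExponentOfDegree σ E) :=
  (Finsupp.finite_of_degree_eq E).fintype

variable {R σ : Type*} [CommSemiring R] {E : ℕ}

/-- The vector of degree `E` coefficients of a polynomial. -/
noncomputable def coeffsOfDegree (E : ℕ) :
    MvPolynomial σ R →ₗ[R] (ExponentOfDegree σ E → R) :=
  LinearMap.pi fun α => lcoeff R α.1

theorem coeffsOfDegree_apply (f : MvPolynomial σ R) (α : ExponentOfDegree σ E) :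
    coeffsOfDegree E f α = coeff α.1 f :=
  rfl

theorem aeval_coeffsOfDegree_map {k A B : Type*} [CommSemiring k] [CommSemiring A]
    [CommSemiring B] [Algebra k A] [Algebra k B] (φ : A →ₐ[k] B) (f : MvPolynomial σ A)
    (q : MvPolynomial (ExponentOfDegree σ E) k) :
    aeval (coeffsOfDegree E (map (φ : A →+* B) f)) q = φ (aeval (coeffsOfDegree E f) q) := by
  rw [comp_aeval_apply]
  congr 2

theorem finrank_homogeneousSubmodule (K σ : Type*) [Field K] [Finite σ] (E : ℕ) :
    Module.finrank K (homogeneousSubmodule σ K E) = Fintype.card (ExponentOfDegree σ E) := by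
  rw [homogeneousSubmodule_eq_finsupp_supported,
    (AddMonoidAlgebra.supportedEquivFinsupp _).finrank_eq]
  exact (Module.finrank_finsupp_self K (ι := ExponentOfDegree σ E))

/-- The form of degree `E` with coefficient vector `c`. -/
noncomputable def formOfCoeffs [Finite σ] (c : ExponentOfDegree σ E → R) : MvPolynomial σ R :=
  ∑ α, monomial α.1 (c α)

theorem isHomogeneous_formOfCoeffs [Finite σ] (c : ExponentOfDegree σ E → R) :
    (formOfCoeffs c).IsHomogeneous E :=
  IsHomogeneous.sum _ _ _ fun α _ => isHomogeneous_monomial _ α.2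

theorem coeffsOfDegree_formOfCoeffs [Finite σ] (c : ExponentOfDegree σ E → R) :
    coeffsOfDegree E (formOfCoeffs c) = c := by
  classical
  ext α
  simp [coeffsOfDegree_apply, formOfCoeffs, coeff_sum, coeff_monomial, Subtype.ext_iff.symm]

theorem formOfCoeffs_coeffsOfDegree [Finite σ] {f : MvPolynomial σ R} (hf : f.IsHomogeneous E) :
    formOfCoeffs (coeffsOfDegree E f) = f := by
  ext α
  by_cases hα : α.degree = E
  · exact congrFun (coeffsOfDegree_formOfCoeffs (coeffsOfDegree E f)) ⟨α, hα⟩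
  · rw [hf.coeff_eq_zero hα, (isHomogeneous_formOfCoeffs _).coeff_eq_zero hα]

theorem map_formOfCoeffs {S : Type*} [CommSemiring S] [Finite σ] (φ : R →+* S)
    (c : ExponentOfDegree σ E → R) :
    map φ (formOfCoeffs c) = formOfCoeffs (φ ∘ c) := by
  simp [formOfCoeffs, map_monomial]

end Coefficients

section Relations

universe u v w

theorem exists_ne_zero_forall_aeval_eq_zero_of_finrank_add_lt {k : Type u} {K : Type v}
    {T : Type w} [Field k] [Field K] [Algebra k K] [Fintype T] {M : ℕ}
    (hM : Algebra.trdeg k K ≤ M) (U : Submodule K (T → K))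
    (hU : Module.finrank K U + M < Fintype.card T) :
    ∃ q : MvPolynomial T k, q ≠ 0 ∧ ∀ u ∈ U, aeval u q = 0 := by
  -- A vector of `U` depends on at most `M + finrank K U` parameters over `k`.
  let b := Module.finBasis K U
  let genericVector (t : T) : MvPolynomial (Fin (Module.finrank K U)) K :=
    ∑ l, X l * C ((b l : T → K) t)
  have dependent : ¬ AlgebraicIndependent k genericVector := fun independent => by
    have card_le := independent.lift_cardinalMk_le_trdeg
    rw [← trdeg_add_eq k K, MvPolynomial.trdeg_of_isDomain, Cardinal.mk_fintype,
      Cardinal.mk_fin, Cardinal.lift_natCast, Cardinal.lift_natCast, Cardinal.lift_add,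
      Cardinal.lift_natCast] at card_le
    have card_le' : (Fintype.card T : Cardinal) ≤ M + (Module.finrank K U : ℕ) :=
      card_le.trans (by gcongr; exact Cardinal.lift_le_nat_iff.mpr hM)
    have : Fintype.card T ≤ M + Module.finrank K U := by exact_mod_cast card_le'
    omega
  rw [algebraicIndependent_iff] at dependent
  push Not at dependent
  obtain ⟨q, hq, hq0⟩ := dependent
  refine ⟨q, hq0, fun u hu => ?_⟩
  have specialize_eq : aeval u =
      ((aeval (R := K) fun l => b.repr ⟨u, hu⟩ l).restrictScalars k).comp
        (aeval (R := k) genericVector) := by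
    ext t
    have expansion := congrFun (congrArg Subtype.val (b.sum_repr ⟨u, hu⟩)) t
    simp only [AddSubmonoidClass.coe_finsetSum, SetLike.val_smul, Finset.sum_apply,
      Pi.smul_apply, smul_eq_mul] at expansion
    simp [genericVector, expansion]
  rw [specialize_eq, AlgHom.comp_apply, hq, map_zero]

theorem trdeg_algebraicClosure_fractionRing_mvPolynomial (k : Type u) (τ : Type v) [Field k] :
    Algebra.trdeg k (AlgebraicClosure (FractionRing (MvPolynomial τ k))) =
      Cardinal.lift.{u} (Cardinal.mk τ) := by
  let A := MvPolynomial τ k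
  have : Algebra.IsAlgebraic A (FractionRing A) := IsLocalization.isAlgebraic _ (nonZeroDivisors A)
  rw [← trdeg_add_eq k (FractionRing A), trdeg_eq_zero (R := FractionRing A),
    add_zero, ← trdeg_add_eq k A, trdeg_eq_zero (R := A), add_zero,
    MvPolynomial.trdeg_of_isDomain]

variable {k σ ι : Type*} [Field k] [Finite σ] [Nontrivial σ] [Finite ι] {δ r D : ℕ}

theorem exists_relation_compositionSpace_of_trdeg_le {K : Type*} [Field K] [IsAlgClosed K]
    [Algebra k K] {M : ℕ} (hM : Algebra.trdeg k K ≤ M) (hcard : Nat.card ι + 2 ≤ 2 * Nat.card σ)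
    (hδ : (δ : k) ≠ 0) (hr : 2 ≤ r) (hrk : (r : k) ≠ 0) {P : ι → MvPolynomial σ K}
    (hP : ∀ j, (P j).IsHomogeneous δ) (hD : 4 * (M + 1) ≤ D) :
    ∃ q : MvPolynomial (ExponentOfDegree σ (δ * r * D)) k, q ≠ 0 ∧
      ∀ f ∈ compositionSpace (fun j => P j ^ r) D, aeval (coeffsOfDegree (δ * r * D) f) q = 0 := by
  have natCast_ne_zero {n : ℕ} (hn : (n : k) ≠ 0) : (n : K) ≠ 0 := by
    rwa [← map_natCast (algebraMap k K), map_ne_zero]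
  have codim := finrank_compositionSpace_pow_add_le hcard (natCast_ne_zero hδ) hr
    (natCast_ne_zero hrk) hP hD
  rw [finrank_homogeneousSubmodule] at codim
  let U := (compositionSpace (fun j => P j ^ r) D).map (coeffsOfDegree (δ * r * D))
  have : Module.Finite K (compositionSpace (fun j => P j ^ r) D) := Module.Finite.map _ _
  have finrank_U_le : Module.finrank K U ≤ _ := Submodule.finrank_map_le _ _
  obtain ⟨q, hq0, hq⟩ :=
    exists_ne_zero_forall_aeval_eq_zero_of_finrank_add_lt hM U (by omega)
  exact ⟨q, hq0, fun f hf => hq _ (Submodule.mem_map_of_mem hf)⟩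

theorem exists_relation_compositionSpace_mvPolynomial {τ : Type*} [Finite τ]
    (hcard : Nat.card ι + 2 ≤ 2 * Nat.card σ) (hδ : (δ : k) ≠ 0) (hr : 2 ≤ r) (hrk : (r : k) ≠ 0)
    {P : ι → MvPolynomial σ (MvPolynomial τ k)} (hP : ∀ j, (P j).IsHomogeneous δ)
    (hD : 4 * (Nat.card τ + 1) ≤ D) :
    ∃ q : MvPolynomial (ExponentOfDegree σ (δ * r * D)) k, q ≠ 0 ∧
      ∀ f ∈ compositionSpace (fun j => P j ^ r) D, aeval (coeffsOfDegree (δ * r * D) f) q = 0 := by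
  let A := MvPolynomial τ k
  let K := AlgebraicClosure (FractionRing A)
  let φ : A →ₐ[k] K := IsScalarTower.toAlgHom k A K
  have φ_injective : Function.Injective φ := by
    change Function.Injective (algebraMap A K)
    rw [IsScalarTower.algebraMap_eq A (FractionRing A) K]
    exact (algebraMap (FractionRing A) K).injective.comp (IsFractionRing.injective A _)
  have trdeg_le : Algebra.trdeg k K ≤ (Nat.card τ : ℕ) := by
    rw [trdeg_algebraicClosure_fractionRing_mvPolynomial, ← Nat.cast_card, Cardinal.lift_natCast]
  obtain ⟨q, hq0, hq⟩ := exists_relation_compositionSpace_of_trdeg_le trdeg_le hcard hδ hr hrk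
    (fun j => (hP j).map (φ : A →+* K)) hD
  refine ⟨q, hq0, fun f hf => φ_injective ?_⟩
  rw [← aeval_coeffsOfDegree_map, map_zero]
  exact hq _ (by simpa only [map_pow] using map_mem_compositionSpace (φ : A →+* K) hf)

theorem exists_relation_forall_compositionSpace (hcard : Nat.card ι + 2 ≤ 2 * Nat.card σ)
    (hδ : (δ : k) ≠ 0) (hr : 2 ≤ r) (hrk : (r : k) ≠ 0)
    (hD : 4 * (Nat.card ι * Fintype.card (ExponentOfDegree σ δ) + 1) ≤ D) :
    ∃ q : MvPolynomial (ExponentOfDegree σ (δ * r * D)) k, q ≠ 0 ∧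
      ∀ P : ι → MvPolynomial σ k, (∀ j, (P j).IsHomogeneous δ) →
        ∀ f ∈ compositionSpace (fun j => P j ^ r) D,
          aeval (coeffsOfDegree (δ * r * D) f) q = 0 := by
  let A := MvPolynomial (ι × ExponentOfDegree σ δ) k
  let generic (j : ι) : MvPolynomial σ A := formOfCoeffs fun α => X (j, α)
  obtain ⟨q, hq0, hq⟩ := exists_relation_compositionSpace_mvPolynomial hcard hδ hr hrk
    (P := generic) (D := D) (fun j => isHomogeneous_formOfCoeffs _)
    (by rwa [Nat.card_prod, Nat.card_eq_fintype_card (α := ExponentOfDegree σ δ)])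
  refine ⟨q, hq0, ?_⟩
  rintro P hP _ ⟨G, hG, rfl⟩
  let specialization : A →ₐ[k] k := aeval fun t => coeffsOfDegree δ (P t.1) t.2
  have map_generic (j : ι) : map (specialization : A →+* k) (generic j) = P j := by
    rw [map_formOfCoeffs, ← formOfCoeffs_coeffsOfDegree (hP j)]
    congr 1
    funext α
    exact aeval_X _ _
  have lift_mem : aeval (fun j => generic j ^ r) (map (algebraMap k A) G) ∈
      compositionSpace (fun j => generic j ^ r) D :=
    ⟨_, IsHomogeneous.map hG _, rfl⟩
  have map_lift : map (specialization : A →+* k)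
      (aeval (fun j => generic j ^ r) (map (algebraMap k A) G)) = aeval (fun j => P j ^ r) G := by
    have retract : (specialization : A →+* k).comp (algebraMap k A) = RingHom.id k :=
      specialization.comp_algebraMap
    change map _ (bind₁ _ _) = _
    rw [map_bind₁, map_map, retract, map_id]
    simp only [map_pow, map_generic]
    rfl
  change aeval (coeffsOfDegree _ (aeval (fun j => P j ^ r) G)) q = 0
  rw [← map_lift, aeval_coeffsOfDegree_map, hq _ lift_mem, map_zero]

end Relations

section Networks

theorem net_succ_isHomogeneous (r : ℕ) (d : ℕ → ℕ)
    (W : ∀ j : ℕ, Matrix (Fin (d (j + 1))) (Fin (d j)) ℝ) (h : ℕ) (j : Fin (d (h + 1))) :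
    (net r d W (h + 1) j).IsHomogeneous (r ^ h) := by
  induction h with
  | zero =>
    refine IsHomogeneous.sum _ _ _ fun k _ => IsHomogeneous.C_mul ?_ _
    simpa [net] using isHomogeneous_X ℝ k
  | succ h ih =>
    refine IsHomogeneous.sum _ _ _ fun k _ => IsHomogeneous.C_mul ?_ _
    simpa [pow_succ] using (ih k).pow r

theorem net_isHomogeneous (r : ℕ) (d : ℕ → ℕ)
    (W : ∀ j : ℕ, Matrix (Fin (d (j + 1))) (Fin (d j)) ℝ) {h : ℕ} (hh : h ≠ 0) (j : Fin (d h)) :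
    (net r d W h j).IsHomogeneous (r ^ (h - 1)) := by
  obtain ⟨h, rfl⟩ := Nat.exists_eq_succ_of_ne_zero hh
  exact net_succ_isHomogeneous r d W h j

theorem net_add (r : ℕ) (d : ℕ → ℕ) (W : ∀ j : ℕ, Matrix (Fin (d (j + 1))) (Fin (d j)) ℝ)
    {i : ℕ} (hi : i ≠ 0) (s : ℕ) (j : Fin (d (i + (s + 1)))) :
    net r d W (i + (s + 1)) j = aeval (fun k => net r d W i k ^ r)
      (net r (fun t => d (i + t)) (fun t => W (i + t)) (s + 1) j) := by
  induction s with
  | zero => simp [net, hi, algHom_C]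
  | succ s ih =>
    rw [net]
    change ∑ k, C (W (i + (s + 1)) j k) * net r d W (i + (s + 1)) k ^
      (if i + (s + 1) = 0 then 1 else r) = _
    simp [ih, algHom_C]

theorem net_add_mem_compositionSpace (r : ℕ) (d : ℕ → ℕ)
    (W : ∀ j : ℕ, Matrix (Fin (d (j + 1))) (Fin (d j)) ℝ) {i : ℕ} (hi : i ≠ 0) (s : ℕ)
    (j : Fin (d (i + (s + 1)))) :
    net r d W (i + (s + 1)) j ∈ compositionSpace (fun k => net r d W i k ^ r) (r ^ s) :=
  ⟨_, net_succ_isHomogeneous r (fun t => d (i + t)) _ s j, (net_add r d W hi s j).symm⟩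

/-- The architecture `(d 0, …, d h)` is non-filling for the activation degree `r`: some polynomial
function of the coefficients vanishes on the functional space, but not on the whole space of
`d h`-tuples of forms of degree `r ^ (h - 1)`. The function is encoded as a polynomial in the
coefficients of all monomials, of which those of the wrong degree are zero on both spaces. -/
def IsNonFilling (r : ℕ) (d : ℕ → ℕ) (h : ℕ) : Prop :=
  ∃ q : MvPolynomial (Fin (d h) × (Fin (d 0) →₀ ℕ)) ℝ,
    (∀ W : ∀ j : ℕ, Matrix (Fin (d (j + 1))) (Fin (d j)) ℝ,
      MvPolynomial.eval
        (fun jm => MvPolynomial.coeff jm.2 (net r d W h jm.1)) q = 0) ∧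
    ∃ p : Fin (d h) → MvPolynomial (Fin (d 0)) ℝ,
      (∀ j, (p j).IsHomogeneous (r ^ (h - 1))) ∧
      MvPolynomial.eval (fun jm => MvPolynomial.coeff jm.2 (p jm.1)) q ≠ 0

theorem isNonFilling_of_relation {r : ℕ} {d : ℕ → ℕ} {h E : ℕ} (hE : E = r ^ (h - 1))
    (j : Fin (d h)) {q : MvPolynomial (ExponentOfDegree (Fin (d 0)) E) ℝ} (hq0 : q ≠ 0)
    (hq : ∀ W, aeval (coeffsOfDegree E (net r d W h j)) q = 0) : IsNonFilling r d h := by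
  subst hE
  obtain ⟨c, hc⟩ : ∃ c, eval c q ≠ 0 := by
    by_contra! hall
    exact hq0 (MvPolynomial.funext fun c => by rw [hall c, map_zero])
  refine ⟨rename (fun α => (j, α.1)) q, fun W => ?_, fun _ => formOfCoeffs c,
    fun _ => isHomogeneous_formOfCoeffs c, ?_⟩ <;> rw [eval_rename]
  · exact hq W
  · rw [← coeffsOfDegree_formOfCoeffs c] at hc
    exact hc

theorem isNonFilling_of_width_add_two_le {r i s : ℕ} {d : ℕ → ℕ} (hr : 2 ≤ r) (hi : i ≠ 0)
    (hd0 : 2 ≤ d 0) (hdi : d i + 2 ≤ 2 * d 0) (hdh : 0 < d (i + (s + 1)))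
    (hs : 4 * (d i * Fintype.card (ExponentOfDegree (Fin (d 0)) (r ^ (i - 1))) + 1) ≤ r ^ s) :
    IsNonFilling r d (i + (s + 1)) := by
  have : Nontrivial (Fin (d 0)) := Fin.nontrivial_iff_two_le.mpr hd0
  obtain ⟨q, hq0, hq⟩ := exists_relation_forall_compositionSpace (k := ℝ) (σ := Fin (d 0))
    (ι := Fin (d i)) (δ := r ^ (i - 1)) (r := r) (by simpa only [Nat.card_fin] using hdi)
    (Nat.cast_ne_zero.mpr (pow_ne_zero _ (by omega))) hr (Nat.cast_ne_zero.mpr (by omega))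
    (by simpa only [Nat.card_fin] using hs)
  have degree_eq : r ^ (i - 1) * r * r ^ s = r ^ (i + (s + 1) - 1) := by
    rw [← pow_succ, ← pow_add]
    congr 1
    omega
  exact isNonFilling_of_relation degree_eq ⟨0, hdh⟩ hq0 fun W =>
    hq _ (net_isHomogeneous r d W hi) _ (net_add_mem_compositionSpace r d W hi s _)

end Networks

theorem width_2d0_minus_2_is_asymptotic_bottleneck_general (r d0 i : ℕ) (hr : 2 ≤ r) (hi : 1 ≤ i) :
    ∃ ht : ℕ, i ≤ ht ∧ ∀ h : ℕ, ht < h →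
      ∀ d : ℕ → ℕ, (∀ j, 0 < d j) → d 0 = d0 → d i ≤ 2 * d0 - 2 → IsNonFilling r d h := by
  let coeffCount := Fintype.card (ExponentOfDegree (Fin d0) (r ^ (i - 1)))
  refine ⟨i + 4 * ((2 * d0 - 2) * coeffCount + 1), Nat.le_add_right _ _, ?_⟩
  rintro h hh d hpos rfl hdi
  obtain ⟨s, rfl⟩ : ∃ s, h = i + (s + 1) := ⟨h - i - 1, by omega⟩
  have hdi_pos := hpos i
  refine isNonFilling_of_width_add_two_le hr (by omega) (by omega) (by omega) (hpos _) ?_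
  calc 4 * (d i * coeffCount + 1) ≤ 4 * ((2 * d 0 - 2) * coeffCount + 1) := by gcongr
    _ ≤ s := by omega
    _ ≤ r ^ s := (Nat.lt_pow_self hr).le

/-- Bottlenecks, unconditional part: for `r ≥ 2`, `d₀ ≥ 2`, `i ≥ 1`, the
width `d_i = 2d₀ - 2` is an asymptotic bottleneck: there is `h̃ ≥ i` such that for every
depth `h > h̃` and all other widths, the architecture with `d 0 = d₀` and `d i = 2d₀ - 2`
is non-filling, i.e. some polynomial function of the coefficients vanishes identically on
the functional space but not on the whole ambient space `Sym_{r^{h-1}}(ℝ^{d₀})^{d_h}`. -/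
theorem width_2d0_minus_2_is_asymptotic_bottleneck
    (r d0 i : ℕ) (hr : 2 ≤ r) (hd0 : 2 ≤ d0) (hi : 1 ≤ i) :
    ∃ ht : ℕ, i ≤ ht ∧
      ∀ h : ℕ, ht < h →
        ∀ d : ℕ → ℕ, (∀ j, 0 < d j) → d 0 = d0 → d i = 2 * d0 - 2 →
          ∃ q : MvPolynomial (Fin (d h) × (Fin (d 0) →₀ ℕ)) ℝ,
            (∀ W : ∀ j : ℕ, Matrix (Fin (d (j + 1))) (Fin (d j)) ℝ,
              MvPolynomial.eval
                (fun jm => MvPolynomial.coeff jm.2 (net r d W h jm.1)) q = 0) ∧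
            ∃ p : Fin (d h) → MvPolynomial (Fin (d 0)) ℝ,
              (∀ j, (p j).IsHomogeneous (r ^ (h - 1))) ∧
              MvPolynomial.eval (fun jm => MvPolynomial.coeff jm.2 (p jm.1)) q ≠ 0 := by
  obtain ⟨ht, hi_le, non_filling⟩ :=
    width_2d0_minus_2_is_asymptotic_bottleneck_general r d0 i hr hi
  exact ⟨ht, hi_le, fun h hh d hpos h0 hdi => non_filling h hh d hpos h0 hdi.le⟩
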